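/- There exist absolute constants C₁, C₂ > 0 such that for all integers n, m with 0 < m < n, every 1 ≤ p ≤ ∞ and every vector b = (b_1,…,b_{2n}) ∈ ℝ^{2n}, the wavelets satisfy the Riesz bounds C₁·‖b‖_{ℓ^p} ≤ ‖Σ_{k=1}^{2n} b_k ψ_{n,k}^m‖_p ≤ C₂·(1 + log²(n/m))·‖b‖_{ℓ^p}, where ‖b‖_{ℓ^p} = ((π/(2n)) Σ_{k=1}^{2n} |b_k|^p)^{1/p} for p < ∞ and ‖b‖_{ℓ^∞} = max_k |b_k|, and ‖f‖_p = (∫_{−1}^{1} |f(x)|^p w(x) dx)^{1/p} with ‖f‖_∞ the sup norm on [−1,1]. -/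

import Mathlib

open Real MeasureTheory Finset

/-- Chebyshev nodes of the first kind: `x_k^n = cos((2k-1)π/(2n))`. -/
noncomputable def chebNode (n k : ℕ) : ℝ :=
  Real.cos ((2 * (k : ℝ) - 1) * Real.pi / (2 * (n : ℝ)))

/-- Orthonormal Chebyshev polynomials of the first kind. -/
noncomputable def chebP (r : ℕ) (x : ℝ) : ℝ :=
  if r = 0 then Real.sqrt (1 / Real.pi)
  else Real.sqrt (2 / Real.pi) * Real.cos ((r : ℝ) * Real.arccos x)

/-- Darboux kernel `K_r(x,y) = Σ_{s=0}^r p_s(x) p_s(y)`. -/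
noncomputable def darboux (r : ℕ) (x y : ℝ) : ℝ :=
  ∑ s ∈ Finset.range (r + 1), chebP s x * chebP s y

/-- de la Vallée Poussin kernel `v_n^m(x,y) = (1/(2m)) Σ_{r=n-m}^{n+m-1} K_r(x,y)`. -/
noncomputable def vpK (n m : ℕ) (x y : ℝ) : ℝ :=
  (1 / (2 * (m : ℝ))) * ∑ r ∈ Finset.Icc (n - m) (n + m - 1), darboux r x y

/-- The Chebyshev weight `w(x) = 1/√(1-x²)`. -/
noncomputable def chebW (x : ℝ) : ℝ := 1 / Real.sqrt (1 - x ^ 2)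

/-- Scaling functions `Φ_{n,k}^m(x) = (π/n) v_n^m(x_k^n, x)`. -/
noncomputable def scal (n m k : ℕ) (x : ℝ) : ℝ :=
  (Real.pi / (n : ℝ)) * vpK n m (chebNode n k) x

/-- The nodes `y_k^n`, `k = 1,…,2n`: the Chebyshev nodes of order `3n` not of order `n`. -/
noncomputable def yNode (n k : ℕ) : ℝ := chebNode (3 * n) (3 * k / 2)

/-- Wavelet functions `ψ_{n,k}^m`. -/
noncomputable def wav (n m k : ℕ) (x : ℝ) : ℝ :=
  (Real.pi / (3 * (n : ℝ))) * vpK (3 * n) m (yNode n k) x -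
    ∑ h ∈ Finset.Icc 1 n,
      scal n m h (yNode n k) * ((Real.pi / (3 * (n : ℝ))) * vpK (3 * n) m (chebNode n h) x)

/-- Filter coefficients `μ_{n,r}^m`. -/
noncomputable def muC (n m r : ℕ) : ℝ :=
  if r ≤ n - m then 1
  else if r < n + m then ((m : ℝ) + (n : ℝ) - (r : ℝ)) / (2 * (m : ℝ))
  else 0

/-- Squared norms `ν_{n,r}^m` of the orthogonal scaling basis. -/
noncomputable def nuC (n m r : ℕ) : ℝ :=
  if r ≤ n - m then 1 else ((m : ℝ) ^ 2 + ((n : ℝ) - (r : ℝ)) ^ 2) / (2 * (m : ℝ) ^ 2)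

/-- Orthogonal scaling basis `Φ_{n,r}^⊥`. -/
noncomputable def scalPerp (n m r : ℕ) (x : ℝ) : ℝ :=
  if r ≤ n - m then chebP r x
  else muC n m r * chebP r x - muC n m (2 * n - r) * chebP (2 * n - r) x

/-- The sup norm on `[-1,1]`. -/
noncomputable def supNorm (f : ℝ → ℝ) : ℝ := ⨆ x : Set.Icc (-1 : ℝ) 1, |f x|

/-- The Lebesgue constant `c_∞ = max_{|x|≤1} ∫_{-1}^1 |v_n^m(x,y)| w(y) dy`. -/
noncomputable def cInf (n m : ℕ) : ℝ :=
  ⨆ x : Set.Icc (-1 : ℝ) 1, ∫ y in (-1 : ℝ)..1, |vpK n m x y| * chebW y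


/-- The weighted `L^q` norm on `[-1,1]`. -/
noncomputable def lpNorm (q : ℝ) (f : ℝ → ℝ) : ℝ :=
  (∫ x in (-1 : ℝ)..1, |f x| ^ q * chebW x) ^ (1 / q)

/-!
The trigonometric de la Vallée Poussin kernel is `sin (n t) sin (m t) / (2 m sin² (t / 2))`, which
gives the interpolation property at the nodes and compares the kernels of parameters `m` and `2 m`
with a single Fejér kernel. Halving the ratio `n / m` this way, the `L¹` norm of `v_n^m(x, ·)` is at
most `2 (1 + log (n / m))`, and only the integrals of polynomials of degree below `2 n` enter: the
bound holds for the Chebyshev weight and for its Gauss quadrature measures alike. By Schur's test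
the operators with kernel `v_n^m` between any two such measures are bounded on every `L^p` by the
same constant.

Let `f = ∑ b_k ψ_k`, so that `f (y_k) = b_k` by interpolation. Both bounds compare the norm of `f`
in the Chebyshev weight with its norm in the normalised counting measure on the `y_k`, which is at
most three times a Gauss measure. The lower bound is a Marcinkiewicz inequality: a kernel `v_N^M`
with `N / M` bounded reproduces `f`. For the upper bound, the values of `f` at the coarse nodes
`x_h` are obtained from those at the `y_k` by the operator `v_n^m`, and `f` itself from its values
at all nodes by `v_{3n}^m`; the two factors `1 + log (n / m)` produce the squared logarithm.
-/

open Polynomial.Chebyshev (measureT T)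
open scoped ENNReal NNReal

/-! ### Kernels on the circle -/

/-- The Dirichlet kernel `D_r(t) = 1 + 2 ∑_{1 ≤ s ≤ r} cos (s t)`, of mean `1` on the circle. -/
noncomputable def dirichletKernel (r : ℕ) (t : ℝ) : ℝ :=
  1 + ∑ s ∈ range r, 2 * cos ((s + 1 : ℕ) * t)

/-- The unnormalised Fejér kernel `∑_{r < M} D_r`, which avoids dividing by `M`. -/
noncomputable def fejerSum (M : ℕ) (t : ℝ) : ℝ :=
  ∑ r ∈ range M, dirichletKernel r t

/-- The de la Vallée Poussin kernel on the circle, the mean of `D_r` over `n - m ≤ r < n + m`. -/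
noncomputable def vpCircle (n m : ℕ) (t : ℝ) : ℝ :=
  (fejerSum (n + m) t - fejerSum (n - m) t) / (2 * m)

lemma dirichletKernel_succ (r : ℕ) (t : ℝ) :
    dirichletKernel (r + 1) t = dirichletKernel r t + 2 * cos ((r + 1 : ℕ) * t) := by
  rw [dirichletKernel, dirichletKernel, sum_range_succ, add_assoc]

lemma fejerSum_succ (M : ℕ) (t : ℝ) :
    fejerSum (M + 1) t = fejerSum M t + dirichletKernel M t :=
  sum_range_succ _ _

@[fun_prop]
lemma continuous_fejerSum (M : ℕ) : Continuous (fejerSum M) := by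
  unfold fejerSum dirichletKernel
  fun_prop

@[fun_prop]
lemma continuous_vpCircle (n m : ℕ) : Continuous (vpCircle n m) := by
  unfold vpCircle
  fun_prop

lemma dirichletKernel_mul_sin (r : ℕ) (t : ℝ) :
    dirichletKernel r t * sin (t / 2) = sin (r * t + t / 2) := by
  induction r with
  | zero => simp [dirichletKernel]
  | succ r ih =>
    have shift : (r : ℝ) * t + t / 2 = (r + 1 : ℕ) * t - t / 2 := by push_cast; ring
    rw [dirichletKernel_succ, add_mul, ih, shift, sin_sub, sin_add]
    ring

lemma fejerSum_mul_sin_sq (M : ℕ) (t : ℝ) :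
    fejerSum M t * sin (t / 2) ^ 2 = sin (M * t / 2) ^ 2 := by
  induction M with
  | zero => simp [fejerSum]
  | succ M ih =>
    have shift : (M : ℝ) * t + t / 2 = M * t / 2 + (M * t / 2 + t / 2) := by ring
    have succ_angle : ((M + 1 : ℕ) : ℝ) * t / 2 = M * t / 2 + t / 2 := by push_cast; ring
    rw [fejerSum_succ, add_mul, ih, pow_two (sin (t / 2)), ← mul_assoc, dirichletKernel_mul_sin,
      shift, succ_angle]
    simp only [sin_add, cos_add]
    linear_combination (-(sin (M * t / 2)) ^ 2) * sin_sq_add_cos_sq (t / 2)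

lemma vpCircle_mul_sin_sq {n m : ℕ} (hmn : m ≤ n) (t : ℝ) :
    vpCircle n m t * sin (t / 2) ^ 2 = sin (n * t) * sin (m * t) / (2 * m) := by
  have h_add : ((n + m : ℕ) : ℝ) * t / 2 = n * t / 2 + m * t / 2 := by push_cast; ring
  have h_sub : ((n - m : ℕ) : ℝ) * t / 2 = n * t / 2 - m * t / 2 := by
    rw [Nat.cast_sub hmn]; ring
  rw [vpCircle, div_mul_eq_mul_div, sub_mul, fejerSum_mul_sin_sq, fejerSum_mul_sin_sq, h_add, h_sub,
    show (n : ℝ) * t = 2 * (n * t / 2) by ring, show (m : ℝ) * t = 2 * (m * t / 2) by ring]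
  simp only [mul_div_cancel_left₀ _ (two_ne_zero' ℝ), sin_two_mul, sin_add, sin_sub]
  ring

lemma dirichletKernel_zero_right (r : ℕ) : dirichletKernel r 0 = 2 * r + 1 := by
  simp only [dirichletKernel, mul_zero, cos_zero, mul_one, sum_const, card_range, nsmul_eq_mul]
  ring

lemma fejerSum_zero_right (M : ℕ) : fejerSum M 0 = (M : ℝ) ^ 2 := by
  induction M with
  | zero => simp [fejerSum]
  | succ M ih =>
    rw [fejerSum_succ, ih, dirichletKernel_zero_right]
    push_cast
    ring

lemma vpCircle_zero_right {n m : ℕ} (hm : 0 < m) (hmn : m ≤ n) : vpCircle n m 0 = 2 * n := by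
  rw [vpCircle, fejerSum_zero_right, fejerSum_zero_right, Nat.cast_sub hmn]
  push_cast
  field_simp
  ring

lemma vpCircle_int_mul_pi_div_eq_zero {n m : ℕ} (hn : n ≠ 0) (hmn : m ≤ n) {a : ℤ}
    (ha : ¬ (2 * n : ℤ) ∣ a) : vpCircle n m (a * π / n) = 0 := by
  have hsin : sin (a * π / n / 2) ≠ 0 := fun h0 => by
    obtain ⟨b, hb⟩ := sin_eq_zero_iff.mp h0
    field_simp at hb
    exact ha ⟨b, by exact_mod_cast (by linarith : (a : ℝ) = 2 * n * b)⟩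
  refine (mul_eq_zero.mp ?_).resolve_right (pow_ne_zero 2 hsin)
  rw [vpCircle_mul_sin_sq hmn, mul_div_cancel₀ _ (Nat.cast_ne_zero.mpr hn), sin_int_mul_pi,
    zero_mul, zero_div]

-- The zeros of `sin (t / 2)` are countable, so the closed set `{f ≤ g}` contains a dense set.
lemma le_of_mul_sin_half_sq_le {f g : ℝ → ℝ} (hf : Continuous f) (hg : Continuous g)
    (h : ∀ t, f t * sin (t / 2) ^ 2 ≤ g t * sin (t / 2) ^ 2) (t : ℝ) : f t ≤ g t := by
  have hzeros : {t : ℝ | sin (t / 2) = 0}.Countable := by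
    refine (Set.countable_range fun k : ℤ => (2 * (k * π) : ℝ)).mono fun t ht => ?_
    obtain ⟨k, hk⟩ := sin_eq_zero_iff.mp ht
    exact ⟨k, by simp only [hk]; ring⟩
  have hsub : {t : ℝ | sin (t / 2) = 0}ᶜ ⊆ {t | f t ≤ g t} := fun t ht =>
    le_of_mul_le_mul_right (h t) (sq_pos_iff.mpr ht)
  exact (isClosed_le hf hg).closure_subset_iff.mpr hsub (hzeros.dense_compl ℝ t)

lemma abs_vpCircle_le_fejerSum {n m : ℕ} (hmn : m ≤ n) (t : ℝ) :
    |vpCircle n m t| ≤ (fejerSum (2 * n) t + fejerSum (2 * m) t) / (4 * m) := by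
  refine le_of_mul_sin_half_sq_le (f := fun t => |vpCircle n m t|) (by fun_prop)
    (g := fun t => (fejerSum (2 * n) t + fejerSum (2 * m) t) / (4 * m)) (by fun_prop)
    (fun t => ?_) t
  have double (k : ℕ) : ((2 * k : ℕ) : ℝ) * t / 2 = k * t := by push_cast; ring
  have am_gm : 2 * (|sin (n * t)| * |sin (m * t)|) ≤ sin (n * t) ^ 2 + sin (m * t) ^ 2 := by
    rw [← sq_abs (sin (n * t)), ← sq_abs (sin (m * t)), ← mul_assoc]
    exact two_mul_le_add_sq _ _
  calc |vpCircle n m t| * sin (t / 2) ^ 2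
      = |vpCircle n m t * sin (t / 2) ^ 2| := by rw [abs_mul, abs_sq]
    _ = 2 * (|sin (n * t)| * |sin (m * t)|) / (4 * m) := by
        rw [vpCircle_mul_sin_sq hmn, abs_div, abs_mul,
          abs_of_nonneg (by positivity : (0 : ℝ) ≤ 2 * m)]
        ring
    _ ≤ (sin (n * t) ^ 2 + sin (m * t) ^ 2) / (4 * m) := by gcongr
    _ = (fejerSum (2 * n) t + fejerSum (2 * m) t) / (4 * m) * sin (t / 2) ^ 2 := by
        rw [div_mul_eq_mul_div, add_mul, fejerSum_mul_sin_sq, fejerSum_mul_sin_sq, double, double]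

-- Since `sin (2x) = 2 sin x cos x`, the difference of the two kernels, multiplied by
-- `sin² (t / 2)`, is `sin (n t) sin (m t) (1 - cos (m t)) / (2 m)`.
lemma abs_vpCircle_sub_le {n m : ℕ} (hmn : 2 * m ≤ n) (t : ℝ) :
    |vpCircle n m t - vpCircle n (2 * m) t| ≤ fejerSum m t / m := by
  refine le_of_mul_sin_half_sq_le (f := fun t => |vpCircle n m t - vpCircle n (2 * m) t|)
    (by fun_prop) (g := fun t => fejerSum m t / m) (by fun_prop) (fun t => ?_) t
  calc |vpCircle n m t - vpCircle n (2 * m) t| * sin (t / 2) ^ 2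
      = |(vpCircle n m t - vpCircle n (2 * m) t) * sin (t / 2) ^ 2| := by rw [abs_mul, abs_sq]
    _ = |sin (n * t) * sin (m * t) * (sin (m * t / 2) ^ 2 / m)| := by
        congr 1
        rw [sub_mul, vpCircle_mul_sin_sq (by lia), vpCircle_mul_sin_sq hmn, Nat.cast_mul,
          Nat.cast_ofNat, mul_assoc 2 (m : ℝ) t, sin_two_mul (m * t), sin_sq_eq_half_sub,
          mul_div_cancel₀ _ (two_ne_zero' ℝ)]
        ring
    _ = |sin (n * t)| * |sin (m * t)| * (sin (m * t / 2) ^ 2 / m) := by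
        rw [abs_mul, abs_mul, abs_of_nonneg (by positivity : 0 ≤ sin (m * t / 2) ^ 2 / m)]
    _ ≤ 1 * (sin (m * t / 2) ^ 2 / m) := by
        gcongr
        exact mul_le_one₀ (abs_sin_le_one _) (abs_nonneg _) (abs_sin_le_one _)
    _ = fejerSum m t / m * sin (t / 2) ^ 2 := by
        rw [one_mul, div_mul_eq_mul_div, fejerSum_mul_sin_sq]

/-! ### Kernels in the Chebyshev polynomials -/

lemma chebP_zero_left (x : ℝ) : chebP 0 x = √(1 / π) := if_pos rfl

lemma chebP_of_ne_zero {r : ℕ} (hr : r ≠ 0) (x : ℝ) : chebP r x = √(2 / π) * cos (r * arccos x) :=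
  if_neg hr

@[fun_prop]
lemma continuous_chebP (r : ℕ) : Continuous (chebP r) := by
  unfold chebP
  split_ifs <;> fun_prop

lemma darboux_succ (r : ℕ) (x y : ℝ) :
    darboux (r + 1) x y = darboux r x y + chebP (r + 1) x * chebP (r + 1) y :=
  sum_range_succ _ _

lemma darboux_eq_dirichletKernel (r : ℕ) (x y : ℝ) :
    darboux r x y = (dirichletKernel r (arccos x - arccos y) +
      dirichletKernel r (arccos x + arccos y)) / (2 * π) := by
  induction r with
  | zero =>
    simp only [darboux, chebP_zero_left, dirichletKernel, zero_add, sum_range_one, range_zero,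
      sum_empty, mul_self_sqrt (by positivity : 0 ≤ 1 / π)]
    ring
  | succ r ih =>
    have h_sqrt : √(2 / π) * √(2 / π) = 2 / π := mul_self_sqrt (by positivity)
    rw [darboux_succ, ih, chebP_of_ne_zero r.succ_ne_zero, chebP_of_ne_zero r.succ_ne_zero,
      mul_mul_mul_comm, h_sqrt, dirichletKernel_succ, dirichletKernel_succ, mul_sub, mul_add,
      cos_sub, cos_add]
    ring

lemma vpK_eq_vpCircle (n m : ℕ) (x y : ℝ) :
    vpK n m x y =
      (vpCircle n m (arccos x - arccos y) + vpCircle n m (arccos x + arccos y)) / (2 * π) := by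
  rcases m.eq_zero_or_pos with rfl | hm
  · simp [vpK, vpCircle]
  have h_icc : Icc (n - m) (n + m - 1) = Ico (n - m) (n + m) := by
    ext r
    simp only [mem_Icc, mem_Ico]
    lia
  have h_sum (t : ℝ) : ∑ r ∈ Ico (n - m) (n + m), dirichletKernel r t =
      fejerSum (n + m) t - fejerSum (n - m) t := sum_Ico_eq_sub _ (by lia)
  simp only [vpK, vpCircle, darboux_eq_dirichletKernel, ← sum_div, sum_add_distrib, h_icc, h_sum]
  ring

/-- The Fejér kernel of the Chebyshev expansion, the mean of the first `M` Darboux kernels. -/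
noncomputable def fejerK (M : ℕ) (x y : ℝ) : ℝ :=
  (∑ r ∈ range M, darboux r x y) / M

lemma fejerK_eq_fejerSum (M : ℕ) (x y : ℝ) :
    fejerK M x y =
      (fejerSum M (arccos x - arccos y) + fejerSum M (arccos x + arccos y)) / (2 * π * M) := by
  simp only [fejerK, fejerSum, darboux_eq_dirichletKernel, ← sum_div, sum_add_distrib, div_div]

lemma continuous_vpK (n m : ℕ) : Continuous (Function.uncurry (vpK n m)) := by
  unfold vpK darboux Function.uncurry
  fun_prop

lemma vpK_comm (n m : ℕ) (x y : ℝ) : vpK n m x y = vpK n m y x := by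
  simp only [vpK, darboux, mul_comm (chebP _ x)]

lemma abs_vpK_le_fejerK {n m : ℕ} (hm : 0 < m) (hmn : m ≤ n) (x y : ℝ) :
    |vpK n m x y| ≤ n / (2 * m) * fejerK (2 * n) x y + fejerK (2 * m) x y / 2 := by
  have hn : 0 < n := hm.trans_le hmn
  rw [vpK_eq_vpCircle, abs_div, abs_of_pos two_pi_pos]
  calc _ ≤ ((fejerSum (2 * n) (arccos x - arccos y) + fejerSum (2 * m) (arccos x - arccos y)) /
          (4 * m) + (fejerSum (2 * n) (arccos x + arccos y) +
            fejerSum (2 * m) (arccos x + arccos y)) / (4 * m)) / (2 * π) := by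
        gcongr
        exact (abs_add_le _ _).trans
          (add_le_add (abs_vpCircle_le_fejerSum hmn _) (abs_vpCircle_le_fejerSum hmn _))
    _ = _ := by
        simp only [fejerK_eq_fejerSum, Nat.cast_mul, Nat.cast_ofNat]
        field_simp
        ring

lemma abs_vpK_sub_le_fejerK {n m : ℕ} (hmn : 2 * m ≤ n) (x y : ℝ) :
    |vpK n m x y - vpK n (2 * m) x y| ≤ fejerK m x y := by
  rw [vpK_eq_vpCircle, vpK_eq_vpCircle, ← sub_div, add_sub_add_comm, abs_div, abs_of_pos two_pi_pos]
  calc _ ≤ (fejerSum m (arccos x - arccos y) / m + fejerSum m (arccos x + arccos y) / m) /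
          (2 * π) := by
        gcongr
        exact (abs_add_le _ _).trans
          (add_le_add (abs_vpCircle_sub_le hmn _) (abs_vpCircle_sub_le hmn _))
    _ = fejerK m x y := by
        rw [fejerK_eq_fejerSum, ← add_div, div_div, mul_comm (m : ℝ)]

/-! ### Reproduction of polynomials -/

/-- The space of Chebyshev expansions of degree less than `N`, as functions on `ℝ`. -/
def chebSpan (N : ℕ) : Submodule ℝ (ℝ → ℝ) :=
  Submodule.span ℝ (Set.image chebP (Set.Iio N))

lemma chebP_mem_chebSpan {r N : ℕ} (hr : r < N) : chebP r ∈ chebSpan N :=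
  Submodule.subset_span ⟨r, hr, rfl⟩

lemma chebSpan_mono {M N : ℕ} (h : M ≤ N) : chebSpan M ≤ chebSpan N :=
  Submodule.span_mono (Set.image_mono (Set.Iio_subset_Iio h))

lemma continuous_of_mem_chebSpan {N : ℕ} {f : ℝ → ℝ} (hf : f ∈ chebSpan N) : Continuous f := by
  induction hf using Submodule.span_induction with
  | mem f hf =>
    obtain ⟨r, -, rfl⟩ := hf
    exact continuous_chebP r
  | zero => exact continuous_const
  | add f g _ _ hf hg => exact hf.add hg
  | smul c f _ hf => exact hf.const_smul c

lemma darboux_mem_chebSpan (r : ℕ) (x : ℝ) : darboux r x ∈ chebSpan (r + 1) := by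
  have h : darboux r x = ∑ s ∈ range (r + 1), chebP s x • chebP s := by
    ext y
    simp [darboux]
  rw [h]
  exact Submodule.sum_mem _ fun s hs =>
    Submodule.smul_mem _ _ (chebP_mem_chebSpan (mem_range.mp hs))

lemma vpK_mem_chebSpan {m : ℕ} (hm : 0 < m) (n : ℕ) (x : ℝ) : vpK n m x ∈ chebSpan (n + m) := by
  have h : vpK n m x = (1 / (2 * m) : ℝ) • ∑ r ∈ Icc (n - m) (n + m - 1), darboux r x := by
    ext y
    simp [vpK]
  rw [h]
  refine Submodule.smul_mem _ _ (Submodule.sum_mem _ fun r hr => ?_)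
  exact chebSpan_mono (by grind) (darboux_mem_chebSpan r x)

lemma integrable_measureT_of_continuous {f : ℝ → ℝ} (hf : Continuous f) : Integrable f measureT :=
  Polynomial.Chebyshev.integrable_measureT hf.continuousOn

instance : IsFiniteMeasure measureT :=
  (integrable_const_iff_isFiniteMeasure (one_ne_zero' ℝ)).mp
    (integrable_measureT_of_continuous continuous_const)

/-- The factor `c_r` with `p_r = c_r T_r` on `[-1, 1]`. -/
noncomputable def chebCoeff (r : ℕ) : ℝ :=
  if r = 0 then √(1 / π) else √(2 / π)

lemma chebP_eq_eval_T (r : ℕ) {x : ℝ} (hx : x ∈ Set.Icc (-1) 1) :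
    chebP r x = chebCoeff r * (T ℝ r).eval x := by
  nth_rw 2 [← cos_arccos hx.1 hx.2]
  by_cases hr : r = 0 <;> simp [chebP, chebCoeff, hr]

lemma integral_measureT_congr {f g : ℝ → ℝ} (h : ∀ x ∈ Set.Icc (-1) 1, f x = g x) :
    ∫ x, f x ∂measureT = ∫ x, g x ∂measureT :=
  setIntegral_congr_fun measurableSet_Ioc fun x hx => h x (Set.Ioc_subset_Icc_self hx)

lemma integral_chebP_mul_chebP (r s : ℕ) :
    ∫ x, chebP r x * chebP s x ∂measureT = if r = s then 1 else 0 := by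
  have h_poly : ∫ x, chebP r x * chebP s x ∂measureT =
      chebCoeff r * chebCoeff s * ∫ x, (T ℝ r).eval x * (T ℝ s).eval x ∂measureT := by
    rw [← integral_const_mul]
    refine integral_measureT_congr fun x hx => ?_
    rw [chebP_eq_eval_T r hx, chebP_eq_eval_T s hx, mul_mul_mul_comm]
  rw [h_poly]
  split_ifs with hrs
  · subst hrs
    by_cases hr : r = 0
    · subst hr
      rw [chebCoeff, if_pos rfl, mul_self_sqrt (by positivity), Nat.cast_zero,
        Polynomial.Chebyshev.integral_eval_T_real_mul_self_measureT_zero,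
        one_div_mul_cancel pi_ne_zero]
    · rw [chebCoeff, if_neg hr, mul_self_sqrt (by positivity),
        Polynomial.Chebyshev.integral_T_real_mul_self_measureT_of_ne_zero hr]
      field_simp
  · rw [Polynomial.Chebyshev.integral_eval_T_real_mul_eval_T_real_measureT_of_ne hrs, mul_zero]

lemma integral_darboux_mul_chebP {r s : ℕ} (hsr : s ≤ r) (x : ℝ) :
    ∫ y, darboux r x y * chebP s y ∂measureT = chebP s x := by
  have h_int (i : ℕ) : Integrable (fun y => chebP i x * (chebP i y * chebP s y)) measureT :=
    integrable_measureT_of_continuous (by fun_prop)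
  simp only [darboux, sum_mul, mul_assoc, integral_finsetSum _ fun i _ => h_int i,
    integral_const_mul, integral_chebP_mul_chebP, mul_ite, mul_one, mul_zero, sum_ite_eq',
    mem_range, Nat.lt_succ_of_le hsr, if_true]

lemma integral_vpK_mul_chebP {n m s : ℕ} (hm : 0 < m) (hmn : m ≤ n) (hs : s ≤ n - m) (x : ℝ) :
    ∫ y, vpK n m x y * chebP s y ∂measureT = chebP s x := by
  have h_int (r : ℕ) : Integrable (fun y => darboux r x y * chebP s y) measureT :=
    integrable_measureT_of_continuous
      ((continuous_of_mem_chebSpan (darboux_mem_chebSpan r x)).mul (continuous_chebP s))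
  have h_card : (n + m - 1 + 1 - (n - m) : ℕ) = 2 * m := by lia
  simp only [vpK, mul_assoc, integral_const_mul, sum_mul, integral_finsetSum _ fun r _ => h_int r]
  rw [sum_congr rfl fun r hr => integral_darboux_mul_chebP (hs.trans (mem_Icc.mp hr).1) x,
    sum_const, Nat.card_Icc, h_card, nsmul_eq_mul, Nat.cast_mul, Nat.cast_ofNat]
  field_simp

theorem integral_vpK_mul_of_mem_chebSpan {n m : ℕ} (hm : 0 < m) (hmn : m ≤ n) {f : ℝ → ℝ}
    (hf : f ∈ chebSpan (n - m + 1)) (x : ℝ) : ∫ y, vpK n m x y * f y ∂measureT = f x := by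
  have h_vpK : Continuous (vpK n m x) := continuous_of_mem_chebSpan (vpK_mem_chebSpan hm n x)
  induction hf using Submodule.span_induction with
  | mem f hf =>
    obtain ⟨s, hs, rfl⟩ := hf
    exact integral_vpK_mul_chebP hm hmn (Nat.lt_succ_iff.mp hs) x
  | zero => simp
  | add f g hf hg ihf ihg =>
    have h_int {h : ℝ → ℝ} (hh : h ∈ chebSpan (n - m + 1)) :
        Integrable (fun y => vpK n m x y * h y) measureT :=
      integrable_measureT_of_continuous (h_vpK.mul (continuous_of_mem_chebSpan hh))
    simp only [Pi.add_apply, mul_add]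
    rw [integral_add (h_int hf) (h_int hg), ihf, ihg]
  | smul c f _ ih =>
    simp only [Pi.smul_apply, smul_eq_mul, mul_left_comm _ c, integral_const_mul, ih]

lemma integral_chebP_measureT (r : ℕ) :
    ∫ x, chebP r x ∂measureT = if r = 0 then √π else 0 := by
  have h : (∫ x, chebP r x ∂measureT) * √(1 / π) = if r = 0 then 1 else 0 := by
    simpa only [chebP_zero_left, integral_mul_const] using integral_chebP_mul_chebP r 0
  rw [one_div, sqrt_inv, ← div_eq_mul_inv, div_eq_iff (by positivity)] at h
  rw [h, ite_mul, one_mul, zero_mul]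

lemma memLp_of_mem_chebSpan {N : ℕ} {f : ℝ → ℝ} (hf : f ∈ chebSpan N) (p : ℝ≥0∞) (μ : Measure ℝ)
    [IsFiniteMeasure μ] : MemLp f p μ := by
  induction hf using Submodule.span_induction with
  | mem f hf =>
    obtain ⟨r, -, rfl⟩ := hf
    have h_meas : AEStronglyMeasurable (chebP r) μ := (continuous_chebP r).aestronglyMeasurable
    refine .of_bound h_meas (chebCoeff r) (.of_forall fun x => ?_)
    unfold chebP chebCoeff
    split_ifs
    · exact (norm_of_nonneg (sqrt_nonneg _)).le
    · rw [norm_mul, norm_of_nonneg (sqrt_nonneg _)]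
      exact mul_le_of_le_one_right (sqrt_nonneg _) (abs_cos_le_one _)
  | zero => exact .zero
  | add f g _ _ hf hg => exact hf.add hg
  | smul c f _ hf => exact hf.const_smul c

lemma integrable_of_mem_chebSpan {N : ℕ} {f : ℝ → ℝ} (hf : f ∈ chebSpan N) (μ : Measure ℝ)
    [IsFiniteMeasure μ] : Integrable f μ :=
  memLp_one_iff_integrable.mp (memLp_of_mem_chebSpan hf 1 μ)

/-! ### Exact measures and the `L¹` norm of the kernel -/

lemma log_natCast_div_nonneg {m n : ℕ} (hm : 0 < m) (hmn : m ≤ n) : 0 ≤ log (n / m : ℝ) :=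
  log_nonneg ((one_le_div (by positivity)).mpr (by exact_mod_cast hmn))

/-- The measure `μ` integrates Chebyshev expansions of degree less than `N` exactly, that is, like
the Chebyshev weight. -/
def IsExactBelow (μ : Measure ℝ) (N : ℕ) : Prop :=
  ∀ r < N, ∫ x, chebP r x ∂μ = ∫ x, chebP r x ∂measureT

lemma isExactBelow_measureT (N : ℕ) : IsExactBelow measureT N := fun _ _ => rfl

lemma IsExactBelow.mono {μ : Measure ℝ} {M N : ℕ} (hμ : IsExactBelow μ N) (h : M ≤ N) :
    IsExactBelow μ M :=
  fun r hr => hμ r (hr.trans_le h)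

section ExactMeasure

variable {μ : Measure ℝ} [IsFiniteMeasure μ] {N : ℕ}

lemma IsExactBelow.integral_darboux (hμ : IsExactBelow μ N) {r : ℕ} (hr : r < N) (x : ℝ) :
    ∫ y, darboux r x y ∂μ = 1 := by
  have h_int (s : ℕ) : Integrable (fun y => chebP s x * chebP s y) μ :=
    (integrable_of_mem_chebSpan (chebP_mem_chebSpan s.lt_succ_self) μ).const_mul _
  have h_term : ∀ s ∈ range (r + 1), ∫ y, chebP s x * chebP s y ∂μ = if s = 0 then 1 else 0 := by
    intro s hs
    rw [integral_const_mul, hμ s (by grind), integral_chebP_measureT, mul_ite, mul_zero]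
    split_ifs with h
    · rw [h, chebP_zero_left, ← sqrt_mul (by positivity), one_div_mul_cancel pi_ne_zero, sqrt_one]
    · rfl
  simp only [darboux]
  rw [integral_finsetSum _ fun s _ => h_int s, sum_congr rfl h_term, sum_ite_eq',
    if_pos (mem_range.mpr r.succ_pos)]

lemma integrable_darboux (r : ℕ) (x : ℝ) : Integrable (darboux r x) μ :=
  integrable_of_mem_chebSpan (darboux_mem_chebSpan r x) μ

lemma integrable_fejerK (M : ℕ) (x : ℝ) : Integrable (fejerK M x) μ :=
  (integrable_finsetSum _ fun r _ => integrable_darboux r x).div_const _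

lemma IsExactBelow.integral_fejerK (hμ : IsExactBelow μ N) {M : ℕ} (hM : 0 < M) (hMN : M ≤ N)
    (x : ℝ) : ∫ y, fejerK M x y ∂μ = 1 := by
  simp only [fejerK, integral_div]
  rw [integral_finsetSum _ fun r _ => integrable_darboux r x,
    sum_congr rfl fun r hr => hμ.integral_darboux ((mem_range.mp hr).trans_le hMN) x]
  simp [hM.ne']

lemma integrable_vpK {m : ℕ} (hm : 0 < m) (n : ℕ) (x : ℝ) : Integrable (vpK n m x) μ :=
  integrable_of_mem_chebSpan (vpK_mem_chebSpan hm n x) μ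

-- Doubling `m` costs one Fejér kernel, of integral `1 ≤ 2 log 2`.
theorem IsExactBelow.integral_abs_vpK_le {n m : ℕ} (hμ : IsExactBelow μ (2 * n)) (hm : 0 < m)
    (hmn : m ≤ n) (x : ℝ) : ∫ y, |vpK n m x y| ∂μ ≤ 2 * (1 + log (n / m)) := by
  have hn : 0 < n := hm.trans_le hmn
  rcases le_or_gt (2 * m) n with h2m | hn2
  · have h_double : ∫ y, |vpK n m x y| ∂μ ≤ (∫ y, |vpK n (2 * m) x y| ∂μ) + 1 := by
      rw [← hμ.integral_fejerK hm (by lia) x,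
        ← integral_add (integrable_vpK (by lia) n x).abs (integrable_fejerK m x)]
      refine integral_mono (integrable_vpK hm n x).abs
        ((integrable_vpK (by lia) n x).abs.add (integrable_fejerK m x)) fun y => ?_
      linarith [abs_sub_abs_le_abs_sub (vpK n m x y) (vpK n (2 * m) x y),
        abs_vpK_sub_le_fejerK h2m x y]
    have h_log : log (n / (2 * m : ℕ)) = log (n / m) - log 2 := by
      rw [Nat.cast_mul, Nat.cast_ofNat, mul_comm, ← div_div, log_div (by positivity) two_ne_zero]
    have ih := hμ.integral_abs_vpK_le (Nat.mul_pos two_pos hm) h2m x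
    rw [h_log] at ih
    linarith [log_two_gt_d9]
  · have h_base : ∫ y, |vpK n m x y| ∂μ ≤ n / (2 * m) + 1 / 2 := by
      have h_int := ((integrable_fejerK (μ := μ) (2 * n) x).const_mul (n / (2 * m) : ℝ)).add
        ((integrable_fejerK (μ := μ) (2 * m) x).div_const 2)
      refine (integral_mono (integrable_vpK hm n x).abs h_int
        fun y => abs_vpK_le_fejerK hm hmn x y).trans_eq ?_
      simp only [Pi.add_apply]
      rw [integral_add ((integrable_fejerK _ x).const_mul _) ((integrable_fejerK _ x).div_const _),
        integral_const_mul, integral_div, hμ.integral_fejerK (by lia) le_rfl,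
        hμ.integral_fejerK (by lia) (by lia), mul_one]
    have h_ratio : (n : ℝ) / (2 * m) ≤ 1 := by
      rw [div_le_one (by positivity)]
      exact_mod_cast hn2.le
    have h_log : 0 ≤ log (n / m : ℝ) := log_natCast_div_nonneg hm hmn
    linarith
termination_by n - m

lemma IsExactBelow.lintegral_enorm_vpK_le {n m : ℕ} (hμ : IsExactBelow μ (2 * n)) (hm : 0 < m)
    (hmn : m ≤ n) (x : ℝ) :
    ∫⁻ y, ‖vpK n m x y‖ₑ ∂μ ≤ ENNReal.ofReal (2 * (1 + log (n / m))) := by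
  rw [← ofReal_integral_norm_eq_lintegral_enorm (integrable_vpK hm n x)]
  exact ENNReal.ofReal_le_ofReal (hμ.integral_abs_vpK_le hm hmn x)

end ExactMeasure

/-! ### Schur's test and the de la Vallée Poussin operators -/

section SchurTest

variable {α β : Type*} [MeasurableSpace α] [MeasurableSpace β]

-- Hölder's inequality for the factorisation `k g = k ^ (1 - 1 / p) * (k g ^ p) ^ (1 / p)`.
lemma lintegral_mul_rpow_le {μ : Measure α} {k g : α → ℝ≥0∞} (hk : AEMeasurable k μ)
    (hg : AEMeasurable g μ) {p : ℝ} (hp : 1 ≤ p) :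
    (∫⁻ x, k x * g x ∂μ) ^ p ≤ (∫⁻ x, k x ∂μ) ^ (p - 1) * ∫⁻ x, k x * g x ^ p ∂μ := by
  have hp0 : 0 < p := by linarith
  have hinv : 0 ≤ 1 - p⁻¹ := sub_nonneg.mpr (inv_le_one_of_one_le₀ hp)
  have h_split (x : α) : k x * g x = k x ^ (1 - p⁻¹) * (k x * g x ^ p) ^ p⁻¹ := by
    rw [ENNReal.mul_rpow_of_nonneg _ _ (by positivity), ← mul_assoc,
      ← ENNReal.rpow_add_of_nonneg _ _ hinv (by positivity), sub_add_cancel,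
      ENNReal.rpow_one, ENNReal.rpow_rpow_inv hp0.ne']
  calc (∫⁻ x, k x * g x ∂μ) ^ p
      = (∫⁻ x, k x ^ (1 - p⁻¹) * (k x * g x ^ p) ^ p⁻¹ ∂μ) ^ p := by
        rw [lintegral_congr h_split]
    _ ≤ ((∫⁻ x, k x ∂μ) ^ (1 - p⁻¹) * (∫⁻ x, k x * g x ^ p ∂μ) ^ p⁻¹) ^ p := by
        gcongr
        exact ENNReal.lintegral_mul_norm_pow_le hk (hk.mul (hg.pow_const p)) hinv (by positivity)
          (sub_add_cancel _ _)
    _ = (∫⁻ x, k x ∂μ) ^ (p - 1) * ∫⁻ x, k x * g x ^ p ∂μ := by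
        rw [ENNReal.mul_rpow_of_nonneg _ _ hp0.le, ENNReal.rpow_inv_rpow hp0.ne',
          ← ENNReal.rpow_mul, sub_mul, one_mul, inv_mul_cancel₀ hp0.ne']

lemma lintegral_lintegral_mul_rpow_le {μ : Measure α} {ν : Measure β} [SFinite μ] [SFinite ν]
    {k : α → β → ℝ≥0∞} (hk : Measurable (Function.uncurry k)) {g : α → ℝ≥0∞} (hg : Measurable g)
    {C : ℝ≥0∞} (hrow : ∀ y, ∫⁻ x, k x y ∂μ ≤ C) (hcol : ∀ x, ∫⁻ y, k x y ∂ν ≤ C)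
    {p : ℝ} (hp : 1 ≤ p) :
    ∫⁻ y, (∫⁻ x, k x y * g x ∂μ) ^ p ∂ν ≤ C ^ p * ∫⁻ x, g x ^ p ∂μ := by
  have h_kg : Measurable (Function.uncurry fun y x => k x y * g x ^ p) := by fun_prop
  calc ∫⁻ y, (∫⁻ x, k x y * g x ∂μ) ^ p ∂ν
      ≤ ∫⁻ y, C ^ (p - 1) * ∫⁻ x, k x y * g x ^ p ∂μ ∂ν := by
        refine lintegral_mono fun y => ?_
        refine (lintegral_mul_rpow_le (by fun_prop) hg.aemeasurable hp).trans ?_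
        gcongr
        exact hrow y
    _ = C ^ (p - 1) * ∫⁻ x, (∫⁻ y, k x y ∂ν) * g x ^ p ∂μ := by
        rw [lintegral_const_mul _ h_kg.lintegral_prod_right,
          lintegral_lintegral_swap h_kg.aemeasurable]
        congr! 3 with x
        exact lintegral_mul_const _ (by fun_prop)
    _ ≤ C ^ (p - 1) * ∫⁻ x, C * g x ^ p ∂μ := by
        gcongr with x
        exact hcol x
    _ = C ^ p * ∫⁻ x, g x ^ p ∂μ := by
        rw [lintegral_const_mul _ (by fun_prop), ← mul_assoc]
        nth_rw 2 [← ENNReal.rpow_one C]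
        rw [← ENNReal.rpow_add_of_nonneg _ _ (by linarith) zero_le_one, sub_add_cancel]

theorem eLpNorm_integral_mul_le {μ : Measure α} {ν : Measure β} [SFinite μ] [SFinite ν]
    {K : α → β → ℝ} (hK : Measurable (Function.uncurry K)) {f : α → ℝ} (hf : Measurable f)
    {C : ℝ≥0∞} (hrow : ∀ y, ∫⁻ x, ‖K x y‖ₑ ∂μ ≤ C) (hcol : ∀ x, ∫⁻ y, ‖K x y‖ₑ ∂ν ≤ C)
    {p : ℝ≥0∞} (hp : 1 ≤ p) :
    eLpNorm (fun y => ∫ x, K x y * f x ∂μ) p ν ≤ C * eLpNorm f p μ := by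
  have h_pt (y : β) : ‖∫ x, K x y * f x ∂μ‖ₑ ≤ ∫⁻ x, ‖K x y‖ₑ * ‖f x‖ₑ ∂μ := by
    simpa only [enorm_mul] using enorm_integral_le_lintegral_enorm (fun x => K x y * f x)
  rcases eq_or_ne p ∞ with rfl | hp_top
  · rw [eLpNorm_exponent_top, eLpNorm_exponent_top]
    refine eLpNormEssSup_le_of_ae_enorm_bound (.of_forall fun y => (h_pt y).trans ?_)
    calc ∫⁻ x, ‖K x y‖ₑ * ‖f x‖ₑ ∂μ
        ≤ ∫⁻ x, ‖K x y‖ₑ * eLpNormEssSup f μ ∂μ :=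
          lintegral_mono_ae ((enorm_ae_le_eLpNormEssSup f μ).mono fun x hx => by gcongr)
      _ = (∫⁻ x, ‖K x y‖ₑ ∂μ) * eLpNormEssSup f μ := lintegral_mul_const _ (by fun_prop)
      _ ≤ C * eLpNormEssSup f μ := by gcongr; exact hrow y
  have hp0 : p ≠ 0 := (zero_lt_one.trans_le hp).ne'
  have hq : 1 ≤ p.toReal := by
    simpa using ENNReal.toReal_mono hp_top hp
  have hq0 : 0 < p.toReal := by linarith
  rw [eLpNorm_eq_lintegral_rpow_enorm_toReal hp0 hp_top,
    eLpNorm_eq_lintegral_rpow_enorm_toReal hp0 hp_top]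
  calc (∫⁻ y, ‖∫ x, K x y * f x ∂μ‖ₑ ^ p.toReal ∂ν) ^ (1 / p.toReal)
      ≤ (∫⁻ y, (∫⁻ x, ‖K x y‖ₑ * ‖f x‖ₑ ∂μ) ^ p.toReal ∂ν) ^ (1 / p.toReal) := by
        gcongr with y
        exact h_pt y
    _ ≤ (C ^ p.toReal * ∫⁻ x, ‖f x‖ₑ ^ p.toReal ∂μ) ^ (1 / p.toReal) := by
        gcongr
        exact lintegral_lintegral_mul_rpow_le (k := fun x y => ‖K x y‖ₑ) (by fun_prop)
          hf.enorm hrow hcol hq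
    _ = C * (∫⁻ x, ‖f x‖ₑ ^ p.toReal ∂μ) ^ (1 / p.toReal) := by
        rw [ENNReal.mul_rpow_of_nonneg _ _ (by positivity), one_div, ENNReal.rpow_rpow_inv hq0.ne']

end SchurTest

/-- The finite measure `μ` is at most `c` times a finite measure that is exact below `N`. -/
def IsDominatedByExact (μ : Measure ℝ) (c : ℝ≥0) (N : ℕ) : Prop :=
  ∃ μ' : Measure ℝ, IsFiniteMeasure μ' ∧ IsExactBelow μ' N ∧ μ ≤ c • μ'

lemma IsExactBelow.isDominatedByExact {μ : Measure ℝ} [IsFiniteMeasure μ] {N : ℕ} {c : ℝ≥0}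
    (hμ : IsExactBelow μ N) (hc : 1 ≤ c) : IsDominatedByExact μ c N :=
  ⟨μ, inferInstance, hμ, by simpa only [one_smul] using (by gcongr : (1 : ℝ≥0) • μ ≤ c • μ)⟩

lemma IsDominatedByExact.mono {μ : Measure ℝ} {c : ℝ≥0} {M N : ℕ} (hμ : IsDominatedByExact μ c N)
    (h : M ≤ N) : IsDominatedByExact μ c M :=
  let ⟨μ', h_fin, h_exact, h_le⟩ := hμ
  ⟨μ', h_fin, h_exact.mono h, h_le⟩

lemma IsDominatedByExact.of_le_smul {μ ν : Measure ℝ} {c d : ℝ≥0} {N : ℕ} (h : μ ≤ d • ν)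
    (hν : IsDominatedByExact ν c N) : IsDominatedByExact μ (d * c) N := by
  obtain ⟨ν', h_fin, h_exact, h_le⟩ := hν
  refine ⟨ν', h_fin, h_exact, h.trans ?_⟩
  rw [mul_smul]
  gcongr

lemma IsDominatedByExact.lintegral_enorm_vpK_le {μ : Measure ℝ} {c : ℝ≥0} {n m : ℕ}
    (hμ : IsDominatedByExact μ c (2 * n)) (hm : 0 < m) (hmn : m ≤ n) (x : ℝ) :
    ∫⁻ y, ‖vpK n m x y‖ₑ ∂μ ≤ c * ENNReal.ofReal (2 * (1 + log (n / m))) := by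
  obtain ⟨μ', h_fin, h_exact, h_le⟩ := hμ
  calc ∫⁻ y, ‖vpK n m x y‖ₑ ∂μ
      ≤ ∫⁻ y, ‖vpK n m x y‖ₑ ∂(c • μ') := lintegral_mono' h_le le_rfl
    _ = c * ∫⁻ y, ‖vpK n m x y‖ₑ ∂μ' := by
      rw [lintegral_smul_measure, ENNReal.smul_def, smul_eq_mul]
    _ ≤ c * ENNReal.ofReal (2 * (1 + log (n / m))) := by
      gcongr
      exact h_exact.lintegral_enorm_vpK_le hm hmn x

/-- The integral operator with kernel `v_n^m`, with respect to the measure `μ`. -/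
noncomputable def vpOp (n m : ℕ) (μ : Measure ℝ) (f : ℝ → ℝ) (x : ℝ) : ℝ :=
  ∫ y, vpK n m x y * f y ∂μ

section Operator

variable {μ ν : Measure ℝ} [SFinite μ] [SFinite ν] {c : ℝ≥0} {n m : ℕ} {f : ℝ → ℝ} {p : ℝ≥0∞}

lemma eLpNorm_vpOp_le (hμ : IsDominatedByExact μ c (2 * n)) (hν : IsDominatedByExact ν c (2 * n))
    (hm : 0 < m) (hmn : m ≤ n) (hf : Continuous f) (hp : 1 ≤ p) :
    eLpNorm (vpOp n m μ f) p ν ≤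
      c * ENNReal.ofReal (2 * (1 + log (n / m))) * eLpNorm f p μ := by
  have h_op : vpOp n m μ f = fun x => ∫ y, vpK n m y x * f y ∂μ := by
    simp only [vpOp, vpK_comm n m, funext_iff, implies_true]
  rw [h_op]
  refine eLpNorm_integral_mul_le (continuous_vpK n m).measurable hf.measurable (fun x => ?_)
    (fun y => hν.lintegral_enorm_vpK_le hm hmn y) hp
  simpa only [vpK_comm n m x] using hμ.lintegral_enorm_vpK_le hm hmn x

lemma memLp_vpOp (hμ : IsDominatedByExact μ c (2 * n)) (hν : IsDominatedByExact ν c (2 * n))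
    (hm : 0 < m) (hmn : m ≤ n) (hf : Continuous f) (hfp : MemLp f p μ) (hp : 1 ≤ p) :
    MemLp (vpOp n m μ f) p ν := by
  have h_meas : StronglyMeasurable (Function.uncurry fun x y => vpK n m x y * f y) :=
    ((continuous_vpK n m).mul (hf.comp continuous_snd)).stronglyMeasurable
  refine ⟨h_meas.integral_prod_right.aestronglyMeasurable,
    (eLpNorm_vpOp_le hμ hν hm hmn hf hp).trans_lt ?_⟩
  exact ENNReal.mul_lt_top (ENNReal.mul_lt_top ENNReal.coe_lt_top ENNReal.ofReal_lt_top) hfp.2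

theorem lpNorm_vpOp_le (hμ : IsDominatedByExact μ c (2 * n)) (hν : IsDominatedByExact ν c (2 * n))
    (hm : 0 < m) (hmn : m ≤ n) (hf : Continuous f) (hfp : MemLp f p μ) (hp : 1 ≤ p) :
    MeasureTheory.lpNorm (vpOp n m μ f) p ν ≤
      c * (2 * (1 + log (n / m))) * MeasureTheory.lpNorm f p μ := by
  have h_log : 0 ≤ log (n / m : ℝ) := log_natCast_div_nonneg hm hmn
  have h_meas := (memLp_vpOp hμ hν hm hmn hf hfp hp).1
  rw [← toReal_eLpNorm h_meas, ← toReal_eLpNorm hfp.1]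
  refine (ENNReal.toReal_mono ?_ (eLpNorm_vpOp_le hμ hν hm hmn hf hp)).trans_eq ?_
  · exact ENNReal.mul_ne_top (ENNReal.mul_ne_top ENNReal.coe_ne_top ENNReal.ofReal_ne_top) hfp.2.ne
  · rw [ENNReal.toReal_mul, ENNReal.toReal_mul, ENNReal.coe_toReal,
      ENNReal.toReal_ofReal (by positivity)]

end Operator

/-! ### Quadrature measures at the nodes -/

/-- The discrete measure of equal masses `π / N` at the points `x 1, …, x N`. -/
noncomputable def nodeMeasure (N : ℕ) (x : ℕ → ℝ) : Measure ℝ :=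
  (π / N).toNNReal • ∑ k ∈ Icc 1 N, Measure.dirac (x k)

instance (N : ℕ) (x : ℕ → ℝ) : IsFiniteMeasure (nodeMeasure N x) := by
  unfold nodeMeasure
  infer_instance

lemma integral_nodeMeasure (N : ℕ) (x : ℕ → ℝ) (f : ℝ → ℝ) :
    ∫ t, f t ∂nodeMeasure N x = π / N * ∑ k ∈ Icc 1 N, f (x k) := by
  rw [nodeMeasure, integral_smul_nnreal_measure, NNReal.smul_def, smul_eq_mul,
    coe_toNNReal _ (by positivity),
    integral_finsetSum_measure fun k _ => integrable_dirac (by simp)]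
  simp only [integral_dirac]

lemma ae_nodeMeasure_iff {N : ℕ} {x : ℕ → ℝ} {q : ℝ → Prop} :
    (∀ᵐ t ∂nodeMeasure N x, q t) ↔ ∀ k ∈ Icc 1 N, q (x k) := by
  rcases eq_or_ne N 0 with rfl | hN
  · simp [nodeMeasure]
  have h_mass : (π / N).toNNReal ≠ 0 := (toNNReal_pos.mpr (by positivity)).ne'
  simp only [nodeMeasure, Measure.ae_smul_measure_iff h_mass, ae_finsetSum_measure_iff, ae_dirac_eq,
    Filter.eventually_pure]

lemma nodeMeasure_le_smul {M N : ℕ} (hN : N ≠ 0) {x y : ℕ → ℝ} {c : ℕ} (hc : N ≤ c * M)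
    (h : ∑ k ∈ Icc 1 M, Measure.dirac (x k) ≤ ∑ k ∈ Icc 1 N, Measure.dirac (y k)) :
    nodeMeasure M x ≤ (c : ℝ≥0) • nodeMeasure N y := by
  have hM : M ≠ 0 := by grind
  have h_mass : (π / M).toNNReal ≤ c * (π / N).toNNReal := by
    rw [← toNNReal_natCast, ← toNNReal_mul (by positivity)]
    refine toNNReal_le_toNNReal ?_
    rw [mul_div_assoc', div_le_div_iff₀ (by positivity) (by positivity), mul_comm (c : ℝ),
      mul_assoc]
    gcongr
    exact_mod_cast hc
  calc nodeMeasure M x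
      ≤ (c * (π / N).toNNReal) • ∑ k ∈ Icc 1 N, Measure.dirac (y k) := by
        unfold nodeMeasure
        gcongr
    _ = (c : ℝ≥0) • nodeMeasure N y := mul_smul _ _ _

lemma isExactBelow_nodeMeasure_chebNode {N : ℕ} (hN : N ≠ 0) :
    IsExactBelow (nodeMeasure N (chebNode N)) (2 * N) := by
  intro r hr
  have h_deg : (T ℝ r).degree < 2 * N := by
    rw [Polynomial.Chebyshev.degree_T]
    exact_mod_cast hr
  have h_node (k : ℕ) : chebP r (chebNode N (1 + k)) =
      chebCoeff r * (T ℝ r).eval (cos ((2 * k + 1) / (2 * N) * π)) := by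
    rw [chebP_eq_eval_T r (show chebNode N (1 + k) ∈ _ from cos_mem_Icc _), chebNode]
    congr 3
    push_cast
    ring
  rw [integral_measureT_congr fun x hx => chebP_eq_eval_T r hx, integral_const_mul,
    Polynomial.Chebyshev.integral_eq_sumZeroes hN h_deg, integral_nodeMeasure,
    Polynomial.Chebyshev.sumZeroes, mul_left_comm, mul_sum (a := chebCoeff r),
    ← Ico_add_one_right_eq_Icc, sum_Ico_eq_sum_range, Nat.add_sub_cancel,
    sum_congr rfl fun k _ => h_node k]

lemma sum_Icc_three_mul {A : Type*} [AddCommMonoid A] (g : ℕ → A) (n : ℕ) :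
    ∑ j ∈ Icc 1 (3 * n), g j =
      ∑ k ∈ Icc 1 (2 * n), g (3 * k / 2) + ∑ h ∈ Icc 1 n, g (3 * h - 1) := by
  induction n with
  | zero => simp
  | succ n ih =>
    have h_odd : 3 * (2 * n + 1) / 2 = 3 * n + 1 := by lia
    have h_even : 3 * (2 * n + 1 + 1) / 2 = 3 * n + 1 + 1 + 1 := by lia
    have h_node : 3 * (n + 1) - 1 = 3 * n + 1 + 1 := by lia
    rw [show 3 * (n + 1) = 3 * n + 1 + 1 + 1 by ring, show 2 * (n + 1) = 2 * n + 1 + 1 by ring]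
    simp only [sum_Icc_succ_top (Nat.le_add_left 1 _), ih, h_odd, h_even, h_node]
    abel

lemma chebNode_three_mul {n h : ℕ} (hh : 0 < h) :
    chebNode (3 * n) (3 * h - 1) = chebNode n h := by
  rw [chebNode, chebNode, Nat.cast_sub (by lia), Nat.cast_mul, Nat.cast_mul, Nat.cast_ofNat,
    Nat.cast_one, ← mul_div_mul_left _ (2 * (n : ℝ)) three_ne_zero]
  congr 2 <;> ring

lemma sum_chebNode_three_mul {A : Type*} [AddCommMonoid A] (g : ℝ → A) (n : ℕ) :
    ∑ j ∈ Icc 1 (3 * n), g (chebNode (3 * n) j) =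
      ∑ k ∈ Icc 1 (2 * n), g (yNode n k) + ∑ h ∈ Icc 1 n, g (chebNode n h) := by
  rw [sum_Icc_three_mul]
  congr 1
  exact sum_congr rfl fun h hh => by rw [chebNode_three_mul (mem_Icc.mp hh).1]

section Domination

variable {n : ℕ} (hn : n ≠ 0)
include hn

lemma nodeMeasure_yNode_le :
    nodeMeasure (2 * n) (yNode n) ≤ (3 : ℝ≥0) • nodeMeasure (3 * n) (chebNode (3 * n)) := by
  refine mod_cast nodeMeasure_le_smul (c := 3) (by lia) (by lia) ?_
  rw [sum_chebNode_three_mul]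
  exact Measure.le_add_right le_rfl

lemma nodeMeasure_chebNode_le :
    nodeMeasure n (chebNode n) ≤ (3 : ℝ≥0) • nodeMeasure (3 * n) (chebNode (3 * n)) := by
  refine mod_cast nodeMeasure_le_smul (c := 3) (by lia) (by lia) ?_
  rw [sum_chebNode_three_mul]
  exact Measure.le_add_left le_rfl

lemma isDominatedByExact_nodeMeasure_chebNode :
    IsDominatedByExact (nodeMeasure n (chebNode n)) 3 (6 * n) :=
  ⟨_, inferInstance, (isExactBelow_nodeMeasure_chebNode (by lia)).mono (by lia),
    nodeMeasure_chebNode_le hn⟩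

lemma isDominatedByExact_nodeMeasure_yNode :
    IsDominatedByExact (nodeMeasure (2 * n) (yNode n)) 3 (6 * n) :=
  ⟨_, inferInstance, (isExactBelow_nodeMeasure_chebNode (by lia)).mono (by lia),
    nodeMeasure_yNode_le hn⟩

lemma isDominatedByExact_nodeMeasure_yNode_eighteen_mul :
    IsDominatedByExact (nodeMeasure (2 * n) (yNode n)) 9 (18 * n) := by
  have h : IsDominatedByExact (nodeMeasure (2 * n) (yNode n)) (3 * 3) (6 * (3 * n)) :=
    (isDominatedByExact_nodeMeasure_chebNode (by lia)).of_le_smul (nodeMeasure_yNode_le hn)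
  convert h using 1
  · norm_num
  · lia

end Domination

/-! ### Interpolation -/

lemma arccos_chebNode {N k : ℕ} (hk : k ∈ Icc 1 N) :
    arccos (chebNode N k) = (2 * k - 1) * π / (2 * N) := by
  obtain ⟨h1, hkN⟩ := mem_Icc.mp hk
  have hN : (0 : ℝ) < N := by exact_mod_cast h1.trans hkN
  have h1' : (1 : ℝ) ≤ k := by exact_mod_cast h1
  have hkN' : (k : ℝ) ≤ N := by exact_mod_cast hkN
  refine arccos_cos (div_nonneg (mul_nonneg (by linarith) pi_pos.le) (by linarith)) ?_
  rw [div_le_iff₀ (by positivity), mul_comm]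
  gcongr
  linarith

lemma mul_vpK_chebNode {N m i j : ℕ} (hm : 0 < m) (hmN : m ≤ N) (hi : i ∈ Icc 1 N)
    (hj : j ∈ Icc 1 N) :
    π / N * vpK N m (chebNode N i) (chebNode N j) = if i = j then 1 else 0 := by
  have hN : N ≠ 0 := by lia
  have hN' : (N : ℝ) ≠ 0 := by exact_mod_cast hN
  have h_add : arccos (chebNode N i) + arccos (chebNode N j) = ((i + j - 1 : ℤ) : ℝ) * π / N := by
    rw [arccos_chebNode hi, arccos_chebNode hj]
    push_cast
    field
  have h_sub : arccos (chebNode N i) - arccos (chebNode N j) = ((i - j : ℤ) : ℝ) * π / N := by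
    rw [arccos_chebNode hi, arccos_chebNode hj]
    push_cast
    field
  have h_add_ndvd : ¬ (2 * N : ℤ) ∣ i + j - 1 := by
    intro h
    have := Int.le_of_dvd (by grind) h
    grind
  rw [vpK_eq_vpCircle, h_add, vpCircle_int_mul_pi_div_eq_zero hN hmN h_add_ndvd, add_zero]
  split_ifs with hij
  · rw [hij, sub_self, vpCircle_zero_right hm hmN]
    field
  · have h_sub_ndvd : ¬ (2 * N : ℤ) ∣ i - j := by
      intro h
      have := Int.eq_zero_of_abs_lt_dvd h (by grind)
      lia
    rw [h_sub, vpCircle_int_mul_pi_div_eq_zero hN hmN h_sub_ndvd, zero_div, mul_zero]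

/-- The wavelet expansion `Σ b_k ψ_{n,k}^m`. -/
noncomputable def wavSum (n m : ℕ) (b : ℕ → ℝ) (x : ℝ) : ℝ :=
  ∑ k ∈ Icc 1 (2 * n), b k * wav n m k x

lemma wavSum_eq_sum_vpK (n m : ℕ) (b : ℕ → ℝ) (x : ℝ) :
    wavSum n m b x =
      ∑ k ∈ Icc 1 (2 * n), b k * (π / (3 * n : ℕ) * vpK (3 * n) m (yNode n k) x) +
      ∑ h ∈ Icc 1 n, (-∑ k ∈ Icc 1 (2 * n), b k * scal n m h (yNode n k)) *
        (π / (3 * n : ℕ) * vpK (3 * n) m (chebNode n h) x) := by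
  simp only [wavSum, wav, mul_sub, sum_sub_distrib, neg_mul, sum_neg_distrib, sum_mul, mul_sum,
    ← sub_eq_add_neg, Nat.cast_mul, Nat.cast_ofNat, mul_assoc]
  rw [sum_comm (s := Icc 1 n)]

lemma wavSum_mem_chebSpan {m : ℕ} (hm : 0 < m) (n : ℕ) (b : ℕ → ℝ) :
    wavSum n m b ∈ chebSpan (3 * n + m) := by
  have h : wavSum n m b =
      ∑ k ∈ Icc 1 (2 * n), b k • (π / (3 * n : ℕ)) • vpK (3 * n) m (yNode n k) +
      ∑ h ∈ Icc 1 n, (-∑ k ∈ Icc 1 (2 * n), b k * scal n m h (yNode n k)) •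
        (π / (3 * n : ℕ)) • vpK (3 * n) m (chebNode n h) := by
    ext x
    simp [wavSum_eq_sum_vpK]
  have h_mem (c : ℝ) (t : ℝ) :
      c • (π / (3 * n : ℕ)) • vpK (3 * n) m t ∈ chebSpan (3 * n + m) :=
    Submodule.smul_mem _ _ (Submodule.smul_mem _ _ (vpK_mem_chebSpan hm _ t))
  rw [h]
  exact Submodule.add_mem _ (Submodule.sum_mem _ fun k _ => h_mem _ _)
    (Submodule.sum_mem _ fun h _ => h_mem _ _)

lemma vpOp_nodeMeasure (n m N : ℕ) (x : ℕ → ℝ) (f : ℝ → ℝ) (t : ℝ) :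
    vpOp n m (nodeMeasure N x) f t = π / N * ∑ k ∈ Icc 1 N, vpK n m t (x k) * f (x k) :=
  integral_nodeMeasure N x _

section Nodes

variable {n m : ℕ} (hm : 0 < m) (hmn : m ≤ n) (b : ℕ → ℝ)
include hm hmn

lemma wavSum_chebNode_three_mul {j : ℕ} (hj : j ∈ Icc 1 (3 * n)) :
    wavSum n m b (chebNode (3 * n) j) =
      (∑ k ∈ Icc 1 (2 * n), if 3 * k / 2 = j then b k else 0) +
      ∑ h ∈ Icc 1 n,
        if 3 * h - 1 = j then -∑ k ∈ Icc 1 (2 * n), b k * scal n m h (yNode n k) else 0 := by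
  rw [wavSum_eq_sum_vpK]
  congr 1
  · refine sum_congr rfl fun k hk => ?_
    rw [yNode, mul_vpK_chebNode hm (by lia) (by grind) hj, mul_ite, mul_one, mul_zero]
  · refine sum_congr rfl fun h hh => ?_
    rw [← chebNode_three_mul (mem_Icc.mp hh).1, mul_vpK_chebNode hm (by lia) (by grind) hj,
      mul_ite, mul_one, mul_zero]

lemma wavSum_yNode {k : ℕ} (hk : k ∈ Icc 1 (2 * n)) : wavSum n m b (yNode n k) = b k := by
  have h_y (l : ℕ) : 3 * l / 2 = 3 * k / 2 ↔ l = k := by lia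
  have h_x : ∀ h ∈ Icc 1 n, 3 * h - 1 ≠ 3 * k / 2 := by grind
  rw [yNode, wavSum_chebNode_three_mul hm hmn b (by grind),
    sum_congr rfl fun h hh => if_neg (h_x h hh), sum_const_zero, add_zero]
  simp only [h_y, sum_ite_eq', hk, if_true]

lemma wavSum_chebNode {h : ℕ} (hh : h ∈ Icc 1 n) :
    wavSum n m b (chebNode n h) = -∑ k ∈ Icc 1 (2 * n), b k * scal n m h (yNode n k) := by
  have h_y (k : ℕ) : 3 * k / 2 ≠ 3 * h - 1 := by grind
  have h_x (i : ℕ) (hi : i ∈ Icc 1 n) : 3 * i - 1 = 3 * h - 1 ↔ i = h := by grind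
  rw [← chebNode_three_mul (mem_Icc.mp hh).1, wavSum_chebNode_three_mul hm hmn b (by grind)]
  simp only [h_y, if_false, sum_const_zero, zero_add]
  rw [sum_congr rfl fun i hi => if_congr (h_x i hi) rfl rfl, sum_ite_eq', if_pos hh]

lemma wavSum_chebNode_eq_vpOp {h : ℕ} (hh : h ∈ Icc 1 n) :
    wavSum n m b (chebNode n h) =
      -2 * vpOp n m (nodeMeasure (2 * n) (yNode n)) (wavSum n m b) (chebNode n h) := by
  rw [wavSum_chebNode hm hmn b hh, vpOp_nodeMeasure, mul_sum, mul_sum, ← sum_neg_distrib]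
  refine sum_congr rfl fun k hk => ?_
  rw [wavSum_yNode hm hmn b hk, scal]
  push_cast
  field

lemma wavSum_eq_vpOp_add_vpOp (x : ℝ) :
    wavSum n m b x =
      2 / 3 * vpOp (3 * n) m (nodeMeasure (2 * n) (yNode n)) (wavSum n m b) x +
      1 / 3 * vpOp (3 * n) m (nodeMeasure n (chebNode n)) (wavSum n m b) x := by
  rw [wavSum_eq_sum_vpK, vpOp_nodeMeasure, vpOp_nodeMeasure]
  simp only [mul_sum]
  congr 1
  · refine sum_congr rfl fun k hk => ?_
    rw [wavSum_yNode hm hmn b hk, vpK_comm]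
    push_cast
    field
  · refine sum_congr rfl fun h hh => ?_
    rw [← wavSum_chebNode hm hmn b hh, vpK_comm]
    push_cast
    field

end Nodes

/-! ### Riesz bounds for abstract `L^p` norms -/

lemma lpNorm_congr_ae {α : Type*} [MeasurableSpace α] {μ : Measure α} {f g : α → ℝ} {p : ℝ≥0∞}
    (hf : AEStronglyMeasurable f μ) (h : f =ᵐ[μ] g) :
    MeasureTheory.lpNorm f p μ = MeasureTheory.lpNorm g p μ := by
  rw [← toReal_eLpNorm hf, ← toReal_eLpNorm (hf.congr h), eLpNorm_congr_ae h]

theorem IsDominatedByExact.lpNorm_le_of_mem_chebSpan {μ : Measure ℝ} [SFinite μ] {c : ℝ≥0}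
    {n m : ℕ} (hμ : IsDominatedByExact μ c (2 * n)) (hc : 1 ≤ c) (hm : 0 < m) (hmn : m ≤ n)
    {f : ℝ → ℝ} (hf : f ∈ chebSpan (n - m + 1)) {p : ℝ≥0∞} (hp : 1 ≤ p) :
    MeasureTheory.lpNorm f p μ ≤
      c * (2 * (1 + log (n / m))) * MeasureTheory.lpNorm f p measureT := by
  have h_repr : vpOp n m measureT f = f :=
    funext fun x => integral_vpK_mul_of_mem_chebSpan hm hmn hf x
  simpa only [h_repr] using
    lpNorm_vpOp_le ((isExactBelow_measureT _).isDominatedByExact hc) hμ hm hmn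
      (continuous_of_mem_chebSpan hf) (memLp_of_mem_chebSpan hf p measureT) hp

lemma lpNorm_vpOp_three_mul_le {μ : Measure ℝ} [SFinite μ] {n m : ℕ}
    (hμ : IsDominatedByExact μ 3 (6 * n)) (hm : 0 < m) (hmn : m ≤ n) {f : ℝ → ℝ}
    (hf : Continuous f) {p : ℝ≥0∞} (hfp : MemLp f p μ) (hp : 1 ≤ p) :
    MeasureTheory.lpNorm (vpOp (3 * n) m μ f) p measureT ≤
      18 * (1 + log (n / m)) * MeasureTheory.lpNorm f p μ := by
  have h_exact : IsDominatedByExact measureT 3 (2 * (3 * n)) :=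
    (isExactBelow_measureT _).isDominatedByExact (by norm_num)
  have hn : (n : ℝ) / m ≠ 0 := by
    have := hm.trans_le hmn
    positivity
  have h_nonneg : 0 ≤ log (n / m : ℝ) := log_natCast_div_nonneg hm hmn
  have h_log : log ((3 * n : ℕ) / m) = log 3 + log (n / m) := by
    rw [Nat.cast_mul, mul_div_assoc, log_mul (by norm_num) hn, Nat.cast_ofNat]
  have h_log_three : log 3 ≤ 2 := (log_le_sub_one_of_pos (by norm_num)).trans (by norm_num)
  refine (lpNorm_vpOp_le (hμ.mono (by lia)) h_exact hm (by lia) hf hfp hp).trans ?_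
  rw [h_log, NNReal.coe_ofNat]
  exact mul_le_mul_of_nonneg_right (by linarith) lpNorm_nonneg

section RieszBounds

variable {n m : ℕ} (hm : 0 < m) (hmn : m ≤ n) (b : ℕ → ℝ) {p : ℝ≥0∞} (hp : 1 ≤ p)
include hm hmn hp

-- The wider kernel `v_{9n}^{5n}` still reproduces degree `3 n + m - 1 < 4 n`, and its `L¹` bound
-- is independent of `n / m`.
theorem lpNorm_wavSum_yNode_le :
    MeasureTheory.lpNorm (wavSum n m b) p (nodeMeasure (2 * n) (yNode n)) ≤
      36 * MeasureTheory.lpNorm (wavSum n m b) p measureT := by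
  have h_mem : wavSum n m b ∈ chebSpan (9 * n - 5 * n + 1) :=
    chebSpan_mono (by lia) (wavSum_mem_chebSpan hm n b)
  have h_dom : IsDominatedByExact (nodeMeasure (2 * n) (yNode n)) 9 (2 * (9 * n)) :=
    (isDominatedByExact_nodeMeasure_yNode_eighteen_mul (by lia)).mono (by lia)
  have h_log : log ((9 * n : ℕ) / (5 * n : ℕ)) ≤ 1 := by
    have hn : (n : ℝ) ≠ 0 := by exact_mod_cast (hm.trans_le hmn).ne'
    rw [Nat.cast_mul, Nat.cast_mul, mul_div_mul_right _ _ hn]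
    exact (log_le_sub_one_of_pos (by norm_num)).trans (by norm_num)
  refine (h_dom.lpNorm_le_of_mem_chebSpan (by norm_num) (by lia) (by lia) h_mem hp).trans ?_
  gcongr
  · simp
  · push_cast at h_log ⊢
    linarith

lemma lpNorm_wavSum_chebNode_le :
    MeasureTheory.lpNorm (wavSum n m b) p (nodeMeasure n (chebNode n)) ≤
      12 * (1 + log (n / m)) *
        MeasureTheory.lpNorm (wavSum n m b) p (nodeMeasure (2 * n) (yNode n)) := by
  have hn : n ≠ 0 := by lia
  have h_mem := wavSum_mem_chebSpan hm n b
  have h_ae : wavSum n m b =ᵐ[nodeMeasure n (chebNode n)]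
      (-2 : ℝ) • vpOp n m (nodeMeasure (2 * n) (yNode n)) (wavSum n m b) :=
    ae_nodeMeasure_iff.mpr fun h hh => wavSum_chebNode_eq_vpOp hm hmn b hh
  have h_op := lpNorm_vpOp_le ((isDominatedByExact_nodeMeasure_yNode hn).mono (by lia))
    ((isDominatedByExact_nodeMeasure_chebNode hn).mono (by lia)) hm hmn
    (continuous_of_mem_chebSpan h_mem) (memLp_of_mem_chebSpan h_mem p _) hp
  rw [lpNorm_congr_ae (memLp_of_mem_chebSpan h_mem p _).1 h_ae, lpNorm_const_smul]
  simp only [nnnorm_neg, Real.nnnorm_ofNat, NNReal.coe_ofNat] at h_op ⊢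
  linarith

theorem lpNorm_wavSum_le :
    MeasureTheory.lpNorm (wavSum n m b) p measureT ≤ 168 * (1 + log (n / m) ^ 2) *
      MeasureTheory.lpNorm (wavSum n m b) p (nodeMeasure (2 * n) (yNode n)) := by
  have hn : n ≠ 0 := by lia
  have h_mem := wavSum_mem_chebSpan hm n b
  have h_cont := continuous_of_mem_chebSpan h_mem
  have h_fine := lpNorm_vpOp_three_mul_le (isDominatedByExact_nodeMeasure_yNode hn) hm hmn h_cont
    (memLp_of_mem_chebSpan h_mem p _) hp
  have h_coarse := lpNorm_vpOp_three_mul_le (isDominatedByExact_nodeMeasure_chebNode hn) hm hmn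
    h_cont (memLp_of_mem_chebSpan h_mem p _) hp
  have h_nodes := lpNorm_wavSum_chebNode_le hm hmn b hp
  have h_nonneg : 0 ≤ log (n / m : ℝ) := log_natCast_div_nonneg hm hmn
  set f := wavSum n m b
  set η := nodeMeasure (2 * n) (yNode n)
  set γ := nodeMeasure n (chebNode n)
  set W := 1 + log (n / m : ℝ)
  have h_repr : f = (2 / 3 : ℝ) • vpOp (3 * n) m η f + (1 / 3 : ℝ) • vpOp (3 * n) m γ f :=
    funext fun x => wavSum_eq_vpOp_add_vpOp hm hmn b x
  have h_memLp : MemLp (vpOp (3 * n) m η f) p measureT :=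
    memLp_vpOp (isDominatedByExact_nodeMeasure_yNode hn |>.mono (by lia))
      ((isExactBelow_measureT _).isDominatedByExact (by norm_num)) hm (by lia) h_cont
      (memLp_of_mem_chebSpan h_mem p _) hp
  have h_norm : 0 ≤ MeasureTheory.lpNorm f p η := lpNorm_nonneg
  calc MeasureTheory.lpNorm f p measureT
      ≤ 2 / 3 * MeasureTheory.lpNorm (vpOp (3 * n) m η f) p measureT +
          1 / 3 * MeasureTheory.lpNorm (vpOp (3 * n) m γ f) p measureT := by
        nth_rw 1 [h_repr]
        refine (lpNorm_add_le (h_memLp.const_smul _) hp).trans_eq ?_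
        rw [lpNorm_const_smul, lpNorm_const_smul]
        norm_num
    _ ≤ 2 / 3 * (18 * W * MeasureTheory.lpNorm f p η) +
          1 / 3 * (18 * W * (12 * W * MeasureTheory.lpNorm f p η)) := by
        gcongr
        exact h_coarse.trans (by gcongr)
    _ = (12 * W + 72 * W ^ 2) * MeasureTheory.lpNorm f p η := by ring
    _ ≤ 168 * (1 + log (n / m) ^ 2) * MeasureTheory.lpNorm f p η := by
        gcongr
        nlinarith [sq_nonneg (log (n / m : ℝ) - 1)]

end RieszBounds

/-! ### Explicit form of the norms -/

lemma lpNorm_ofReal_eq_integral {α : Type*} [MeasurableSpace α] {μ : Measure α} {f : α → ℝ}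
    (hf : AEStronglyMeasurable f μ) {p : ℝ} (hp : 0 < p) :
    MeasureTheory.lpNorm f (ENNReal.ofReal p) μ = (∫ x, |f x| ^ p ∂μ) ^ (1 / p) := by
  rw [lpNorm_eq_integral_norm_rpow_toReal (ENNReal.ofReal_pos.mpr hp).ne' ENNReal.ofReal_ne_top hf,
    ENNReal.toReal_ofReal hp.le, one_div]
  rfl

lemma lpNorm_measureT {f : ℝ → ℝ} (hf : Continuous f) {p : ℝ} (hp : 0 < p) :
    MeasureTheory.lpNorm f (ENNReal.ofReal p) measureT = lpNorm p f := by
  rw [lpNorm_ofReal_eq_integral hf.aestronglyMeasurable hp, _root_.lpNorm,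
    Polynomial.Chebyshev.integral_measureT]
  simp only [chebW, sqrt_inv, one_div]

lemma lpNorm_nodeMeasure {f : ℝ → ℝ} (hf : Continuous f) (N : ℕ) (x : ℕ → ℝ) {p : ℝ} (hp : 0 < p) :
    MeasureTheory.lpNorm f (ENNReal.ofReal p) (nodeMeasure N x) =
      (π / N * ∑ k ∈ Icc 1 N, |f (x k)| ^ p) ^ (1 / p) := by
  rw [lpNorm_ofReal_eq_integral hf.aestronglyMeasurable hp, integral_nodeMeasure]

lemma lpNorm_top_le {α : Type*} [MeasurableSpace α] {μ : Measure α} {f : α → ℝ}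
    (hf : AEStronglyMeasurable f μ) {C : ℝ} (hC : 0 ≤ C) (h : ∀ᵐ x ∂μ, |f x| ≤ C) :
    MeasureTheory.lpNorm f ∞ μ ≤ C := by
  rw [← toReal_eLpNorm hf, eLpNorm_exponent_top]
  exact ENNReal.toReal_le_of_le_ofReal hC (eLpNormEssSup_le_of_ae_bound h)

lemma lpNorm_top_nodeMeasure {f : ℝ → ℝ} (hf : Continuous f) {N : ℕ} (x : ℕ → ℝ)
    (hN : (Icc 1 N).Nonempty) :
    MeasureTheory.lpNorm f ∞ (nodeMeasure N x) = (Icc 1 N).sup' hN fun k => |f (x k)| := by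
  have h_bound : ∀ᵐ t ∂nodeMeasure N x, |f t| ≤ (Icc 1 N).sup' hN fun k => |f (x k)| :=
    ae_nodeMeasure_iff.mpr fun k hk => le_sup' (fun k => |f (x k)|) hk
  have h_memLp : MemLp f ∞ (nodeMeasure N x) :=
    memLp_top_of_bound hf.aestronglyMeasurable _ h_bound
  refine le_antisymm (lpNorm_top_le hf.aestronglyMeasurable ?_ h_bound) ?_
  · obtain ⟨k, hk⟩ := hN
    exact (abs_nonneg _).trans (le_sup' (fun k => |f (x k)|) hk)
  · exact sup'_le _ _ (ae_nodeMeasure_iff.mp (ae_le_lpNorm_exponent_top h_memLp))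

lemma volume_restrict_absolutelyContinuous_measureT :
    volume.restrict (Set.Icc (-1) 1) ≪ measureT := by
  rw [measureT, restrict_withDensity measurableSet_Ioc,
    Measure.restrict_congr_set (Ioc_ae_eq_Icc (a := (-1 : ℝ)) (b := 1))]
  refine withDensity_absolutelyContinuous' (by fun_prop) ?_
  rw [← Measure.restrict_congr_set Ioo_ae_eq_Icc]
  refine ae_restrict_of_forall_mem measurableSet_Ioo fun x hx => ?_
  have : 0 < 1 - x ^ 2 := by nlinarith [hx.1, hx.2]
  simpa [← NNReal.coe_ne_zero] using (by positivity : √(1 - x ^ 2)⁻¹ ≠ 0)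

lemma forall_mem_Icc_of_ae_measureT {f : ℝ → ℝ} (hf : Continuous f) {C : ℝ}
    (h : ∀ᵐ x ∂measureT, f x ≤ C) : ∀ x ∈ Set.Icc (-1) 1, f x ≤ C := by
  have h_volume : ∀ᵐ x ∂volume.restrict (Set.Icc (-1) 1), f x ≤ C :=
    volume_restrict_absolutelyContinuous_measureT.ae_le h
  have h_ae : (fun x => max (f x) C) =ᵐ[volume.restrict (Set.Icc (-1) 1)] fun _ => C :=
    h_volume.mono fun x hx => max_eq_right hx
  have h_eq := Measure.eqOn_Icc_of_ae_eq volume (by norm_num) h_ae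
    (hf.max continuous_const).continuousOn continuousOn_const
  exact fun x hx => max_eq_right_iff.mp (h_eq hx)

lemma lpNorm_top_measureT {f : ℝ → ℝ} (hf : Continuous f) :
    MeasureTheory.lpNorm f ∞ measureT = supNorm f := by
  have h_bdd : BddAbove (Set.range fun x : Set.Icc (-1 : ℝ) 1 => |f x|) :=
    (isCompact_range (by fun_prop)).bddAbove
  have h_bound : ∀ᵐ x ∂measureT, |f x| ≤ supNorm f :=
    ae_restrict_of_forall_mem measurableSet_Ioc fun x hx =>
      le_ciSup h_bdd ⟨x, Set.Ioc_subset_Icc_self hx⟩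
  have h_memLp : MemLp f ∞ measureT := memLp_top_of_bound hf.aestronglyMeasurable _ h_bound
  have : Nonempty (Set.Icc (-1 : ℝ) 1) := ⟨0, by norm_num⟩
  refine le_antisymm (lpNorm_top_le hf.aestronglyMeasurable ?_ h_bound) ?_
  · exact iSup_nonneg fun x => abs_nonneg _
  · exact ciSup_le fun x =>
      forall_mem_Icc_of_ae_measureT hf.abs (ae_le_lpNorm_exponent_top h_memLp) x x.2

section CoefficientNorms

variable {n m : ℕ} (hm : 0 < m) (hmn : m ≤ n) (b : ℕ → ℝ)
include hm hmn

lemma lpNorm_wavSum_yNode {p : ℝ} (hp : 0 < p) :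
    MeasureTheory.lpNorm (wavSum n m b) (ENNReal.ofReal p) (nodeMeasure (2 * n) (yNode n)) =
      (π / (2 * n) * ∑ k ∈ Icc 1 (2 * n), |b k| ^ p) ^ (1 / p) := by
  rw [lpNorm_nodeMeasure (continuous_of_mem_chebSpan (wavSum_mem_chebSpan hm n b)) _ _ hp,
    sum_congr rfl fun k hk => by rw [wavSum_yNode hm hmn b hk], Nat.cast_mul, Nat.cast_ofNat]

lemma lpNorm_top_wavSum_yNode (hn : (Icc 1 (2 * n)).Nonempty) :
    MeasureTheory.lpNorm (wavSum n m b) ∞ (nodeMeasure (2 * n) (yNode n)) =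
      (Icc 1 (2 * n)).sup' hn fun k => |b k| := by
  rw [lpNorm_top_nodeMeasure (continuous_of_mem_chebSpan (wavSum_mem_chebSpan hm n b)) _ hn]
  exact sup'_congr hn rfl fun k hk => by rw [wavSum_yNode hm hmn b hk]

end CoefficientNorms

theorem wav_riesz_bounds :
    ∃ C₁ C₂ : ℝ, 0 < C₁ ∧ 0 < C₂ ∧ ∀ n m : ℕ, (hm : 0 < m) → (hmn : m < n) → ∀ b : ℕ → ℝ,
      (∀ p : ℝ, 1 ≤ p →
        C₁ * ((Real.pi / (2 * (n : ℝ)) * ∑ k ∈ Finset.Icc 1 (2 * n), |b k| ^ p) ^ (1 / p)) ≤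
            lpNorm p (fun x => ∑ k ∈ Finset.Icc 1 (2 * n), b k * wav n m k x) ∧
          lpNorm p (fun x => ∑ k ∈ Finset.Icc 1 (2 * n), b k * wav n m k x) ≤
            C₂ * (1 + Real.log ((n : ℝ) / (m : ℝ)) ^ 2) *
              ((Real.pi / (2 * (n : ℝ)) * ∑ k ∈ Finset.Icc 1 (2 * n), |b k| ^ p) ^ (1 / p))) ∧
      (C₁ * ((Finset.Icc 1 (2 * n)).sup' (Finset.nonempty_Icc.mpr (by omega)) fun k => |b k|) ≤
          supNorm (fun x => ∑ k ∈ Finset.Icc 1 (2 * n), b k * wav n m k x) ∧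
        supNorm (fun x => ∑ k ∈ Finset.Icc 1 (2 * n), b k * wav n m k x) ≤
          C₂ * (1 + Real.log ((n : ℝ) / (m : ℝ)) ^ 2) *
            ((Finset.Icc 1 (2 * n)).sup' (Finset.nonempty_Icc.mpr (by omega)) fun k => |b k|)) := by
  refine ⟨1 / 36, 168, by norm_num, by norm_num, fun n m hm hmn b => ?_⟩
  change (∀ p : ℝ, 1 ≤ p → _ ≤ lpNorm p (wavSum n m b) ∧ lpNorm p (wavSum n m b) ≤ _) ∧
    _ ≤ supNorm (wavSum n m b) ∧ supNorm (wavSum n m b) ≤ _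
  have h_cont := continuous_of_mem_chebSpan (wavSum_mem_chebSpan hm n b)
  have h_lower {p : ℝ≥0∞} (hp : 1 ≤ p) := lpNorm_wavSum_yNode_le hm hmn.le b hp
  have h_upper {p : ℝ≥0∞} (hp : 1 ≤ p) := lpNorm_wavSum_le hm hmn.le b hp
  refine ⟨fun p hp => ?_, ?_⟩
  · have hp_pos : 0 < p := by linarith
    have hp_one : 1 ≤ ENNReal.ofReal p := ENNReal.one_le_ofReal.mpr hp
    rw [← lpNorm_wavSum_yNode hm hmn.le b hp_pos, ← lpNorm_measureT h_cont hp_pos]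
    exact ⟨by linarith [h_lower hp_one], h_upper hp_one⟩
  · rw [← lpNorm_top_wavSum_yNode hm hmn.le b, ← lpNorm_top_measureT h_cont]
    exact ⟨by linarith [h_lower le_top], h_upper le_top⟩
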